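/- Let (G_i)_{i∈ι} be a family of groups and G = *_{i∈ι} G_i their free product (coproduct of groups). Let i₀ ∈ ι, let x be the image in G of a non-trivial element of G_{i₀}, and let g ∈ G satisfy g⁻¹ x g = x. Then g lies in the image of G_{i₀} in G. -/

import Mathlib

namespace Monoid.CoprodI

variable {ι : Type*}

theorem Word.prod_injective {M : ι → Type*} [∀ i, Monoid (M i)] :
    Function.Injective (Word.prod : Word M → CoprodI M) := by
  classical
  exact Word.equiv.symm.injective

theorem exists_eq_of_mul_prod {M : ι → Type*} [∀ i, Monoid (M i)] (i : ι) (g : CoprodI M) :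
    ∃ (m : M i) (w : Word M), w.fstIdx ≠ some i ∧ g = of m * w.prod := by
  classical
  let p := Word.equivPair i (Word.equiv g)
  refine ⟨p.head, p.tail, p.fstIdx_ne, ?_⟩
  rw [← Word.prod_smul, Word.equivPair_head_smul_equivPair_tail]
  exact (Word.equiv.symm_apply_apply g).symm

/-- Conjugating a non-trivial element of a factor by a non-empty reduced word which does not start
in that factor yields an element which lies in no factor. -/
theorem NeWord.inv_prod_mul_of_mul_prod_ne_of {G : ι → Type*} [∀ i, Group (G i)] {i j k l : ι}
    (w : NeWord G i j) (hk : i ≠ k) {b : G k} (hb : b ≠ 1) {a : G l} (ha : a ≠ 1) :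
    w.prod⁻¹ * of b * w.prod ≠ of a := by
  intro h
  let v : NeWord G j j := (w.inv.append hk (.singleton b hb)).append hk.symm w
  have hv : v.toWord = (NeWord.singleton a ha).toWord := by
    apply Word.prod_injective
    change v.prod = (NeWord.singleton a ha).prod
    simpa [v] using h
  have hlen := congrArg (fun u : Word G => u.toList.length) hv
  have hw := List.length_pos_of_ne_nil w.toList_ne_nil
  simp only [v, NeWord.toWord, NeWord.toList, List.length_append, List.length_singleton] at hlen
  omega

end Monoid.CoprodI

open Monoid.CoprodI in
theorem stmt12 {ι : Type*} (G : ι → Type*) [∀ i, Group (G i)] (i₀ : ι)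
    (a : G i₀) (ha : a ≠ 1) (g : Monoid.CoprodI G)
    (hg : g⁻¹ * Monoid.CoprodI.of a * g = Monoid.CoprodI.of a) :
    g ∈ (Monoid.CoprodI.of : G i₀ →* Monoid.CoprodI G).range := by
  obtain ⟨m, w, hw, rfl⟩ := exists_eq_of_mul_prod i₀ g
  by_cases hne : w = Word.empty
  · exact ⟨m, by simp [hne]⟩
  obtain ⟨i, j, v, rfl⟩ := NeWord.of_word w hne
  have hi : i ≠ i₀ := by
    rintro rfl
    exact hw (by simp [Word.fstIdx, NeWord.toWord, NeWord.toList_head?])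
  have hb : m⁻¹ * a * m ≠ 1 := by
    simpa using (conj_eq_one_iff (a := m⁻¹) (b := a)).not.mpr ha
  refine absurd ?_ (v.inv_prod_mul_of_mul_prod_ne_of hi hb ha)
  rw [← hg]
  simp only [map_mul, map_inv, mul_inv_rev, mul_assoc, NeWord.prod]
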